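/- Let v ≠ s be a vertex of 𝔅_n and let e ∈ B(v) be an agent edge of 𝔇_n belonging to v. Let π be a weak unichain policy for 𝔇_n such that Val_π(u) ≥ 0 for every vertex u. If e is an improving switch for π, then p_v/4 ≤ z_π(e) ≤ p_v · 2^{n+2}. -/

import Mathlib

/-! ## The Markov decision process `𝔅_n` -/

/-- Vertices of the MDP `𝔅_n`: a transportation vertex `t`, a sink `s`, a dummy vertex `d`,
and vertices `a i`, `b i` for `i ∈ {1,…,n}`. -/
inductive BV : Type where
  | t : BV
  | s : BV
  | d : BV
  | a : ℕ → BV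
  | b : ℕ → BV
deriving DecidableEq

/-- The vertex `a i` for `i ∈ {1,…,n+1}`, with the convention `a (n+1) = s`. -/
def aN (n i : ℕ) : BV := if i = n + 1 then BV.s else BV.a i

/-- The vertex `b i` for `i ∈ {1,…,n+1}`, with the convention `b (n+1) = d`. -/
def bN (n i : ℕ) : BV := if i = n + 1 then BV.d else BV.b i

/-- The vertex set of `𝔅_n`. -/
def IsBVertex (n : ℕ) : BV → Prop
  | BV.t => True
  | BV.s => True
  | BV.d => True
  | BV.a i => 1 ≤ i ∧ i ≤ n
  | BV.b i => 1 ≤ i ∧ i ≤ n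

/-- The edge relation of `𝔅_n`: travel, enter, skip, board, stay, leave edges,
the edge `(d,s)` and the self-loop `(s,s)`. -/
def BEdge (n : ℕ) (u v : BV) : Prop :=
  (∃ i, 1 ≤ i ∧ i ≤ n ∧ u = BV.t ∧ v = BV.a i) ∨
  (∃ i, 1 ≤ i ∧ i ≤ n ∧ u = BV.a i ∧ v = BV.b i) ∨
  (∃ i, 1 ≤ i ∧ i ≤ n ∧ u = BV.a i ∧ v = aN n (i + 1)) ∨
  (∃ i, 1 ≤ i ∧ i ≤ n ∧ u = BV.a i ∧ v = BV.t) ∨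
  (∃ i, 1 ≤ i ∧ i ≤ n ∧ u = BV.b i ∧ v = bN n (i + 1)) ∨
  (∃ i, 1 ≤ i ∧ i ≤ n ∧ u = BV.b i ∧ v = aN n (i + 1)) ∨
  (u = BV.d ∧ v = BV.s) ∨ (u = BV.s ∧ v = BV.s)

/-- The reward function of `𝔅_n`: `r(enter i) = 2^i`, `r(stay i) = 3/4`,
`r(board i) = -2^i + 5/4`, and reward `0` on all other edges. -/
def rB (n : ℕ) (u v : BV) : ℚ :=
  match u, v with
  | BV.a i, BV.b j => if i = j then 2 ^ i else 0
  | BV.a i, BV.t => -(2 ^ i) + 5 / 4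
  | BV.b i, BV.b j => if j = i + 1 then 3 / 4 else 0
  | BV.b i, BV.d => if i = n then 3 / 4 else 0
  | _, _ => 0

/-- A policy for `𝔅_n` chooses an outgoing edge at every vertex. -/
def IsBPolicy (n : ℕ) (π : BV → BV) : Prop := ∀ u, IsBVertex n u → BEdge n u (π u)

/-- A policy is weak unichain if it reaches the sink `s` from every vertex. -/
def BWeakUnichain (n : ℕ) (π : BV → BV) : Prop :=
  ∀ u, IsBVertex n u → ∃ k, π^[k] u = BV.s

open Classical in
/-- The value of a vertex `v` w.r.t. a (weak unichain) policy `π`: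
the sum of the rewards along the path that `π` takes from `v` to the sink `s`. -/
noncomputable def BVal (n : ℕ) (π : BV → BV) (v : BV) : ℚ :=
  if h : ∃ k, π^[k] v = BV.s then
    ∑ i ∈ Finset.range (Nat.find h), rB n (π^[i] v) (π^[i + 1] v)
  else 0

/-- The reduced costs of the edge `(u,v)` w.r.t. the policy `π`. -/
noncomputable def zB (n : ℕ) (π : BV → BV) (u v : BV) : ℚ :=
  rB n u v + BVal n π v - BVal n π u

/-- The edge `(u,v)` is an improving switch for `π` if its reduced costs are positive. -/
def BImproving (n : ℕ) (π : BV → BV) (u v : BV) : Prop :=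
  BEdge n u v ∧ 0 < zB n π u v

/-- The Bland numbering `𝒩_{𝔅_n}` of the edges of `𝔅_n`. -/
def NB (n : ℕ) (u v : BV) : ℕ :=
  match u, v with
  | BV.t, BV.a i => i
  | BV.a i, BV.b _ => n + 1 + 5 * (i - 1)
  | BV.a i, BV.a _ => n + 2 + 5 * (i - 1)
  | BV.a i, BV.s => n + 2 + 5 * (i - 1)
  | BV.a i, BV.t => n + 3 + 5 * (i - 1)
  | BV.b i, BV.b _ => n + 4 + 5 * (i - 1)
  | BV.b i, BV.d => n + 4 + 5 * (i - 1)
  | BV.b i, BV.a _ => n + 5 + 5 * (i - 1)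
  | BV.b i, BV.s => n + 5 + 5 * (i - 1)
  | BV.d, BV.s => 6 * n + 1
  | BV.s, BV.s => 6 * n + 2
  | _, _ => 0

/-- One step of Bland's policy iteration with edge numbering `N`:
apply the improving switch with the smallest number. -/
def IsBlandStep (n : ℕ) (N : BV → BV → ℕ) (π π' : BV → BV) : Prop :=
  ∃ u v, BImproving n π u v ∧ (∀ u' v', BImproving n π u' v' → N u v ≤ N u' v') ∧
    π' = Function.update π u v

/-- `BlandReaches n N π ψ` says that Bland's policy iteration started at `π` visits `ψ`. -/
def BlandReaches (n : ℕ) (N : BV → BV → ℕ) : (BV → BV) → (BV → BV) → Prop :=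
  Relation.ReflTransGen (IsBlandStep n N)

/-- The canonical policy `π_0` for `0`: `travel 1`, `skip i` and `leave i` are active. -/
def pi0 (n : ℕ) : BV → BV := fun u =>
  match u with
  | BV.t => BV.a 1
  | BV.a i => aN n (i + 1)
  | BV.b i => aN n (i + 1)
  | BV.d => BV.s
  | BV.s => BV.s

/-- The optimal policy `π_*`: `travel 1`, `enter i` for all `i`, `leave j` for `j < n`,
and `stay n` are active. -/
def piStar (n : ℕ) : BV → BV := fun u =>
  match u with
  | BV.t => BV.a 1
  | BV.a i => BV.b i
  | BV.b i => if i = n then BV.d else BV.a (i + 1)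
  | BV.d => BV.s
  | BV.s => BV.s

/-! ## Bits and canonical policies -/

/-- The least significant set bit `ℓ_1(x)` (1-based). -/
noncomputable def lsb (x : ℕ) : ℕ := sInf {i | 1 ≤ i ∧ Nat.testBit x (i - 1)}

/-- The most significant set bit `m(x)` (1-based). -/
noncomputable def msb1 (x : ℕ) : ℕ := sSup {i | 1 ≤ i ∧ Nat.testBit x (i - 1)}

/-- The least unset bit `ℓ_0(x)` (1-based). -/
noncomputable def lzero (x : ℕ) : ℕ := sInf {i | 1 ≤ i ∧ ¬ Nat.testBit x (i - 1)}

/-- `L_i(x) = max { j ≤ i-2 | x_j = 1 or j = 1 }` (1-based bits). -/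
noncomputable def Lfun (i x : ℕ) : ℕ :=
  sSup {j | 1 ≤ j ∧ j ≤ i - 2 ∧ (Nat.testBit x (j - 1) ∨ j = 1)}

/-- `IsCanonical n x π` says that `π` is the canonical policy `π_x` for `x`. -/
noncomputable def IsCanonical (n x : ℕ) (π : BV → BV) : Prop :=
  IsBPolicy n π ∧
  if x = 0 then
    π BV.t = BV.a 1 ∧
      ∀ i, 1 ≤ i → i ≤ n → π (BV.a i) = aN n (i + 1) ∧ π (BV.b i) = aN n (i + 1)
  else
    π BV.t = BV.a (lsb x) ∧
    π (BV.b (msb1 x)) = aN n (msb1 x + 1) ∧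
    (∀ i, msb1 x < i → i ≤ n → π (BV.a i) = aN n (i + 1) ∧ π (BV.b i) = aN n (i + 1)) ∧
    ∀ i, 1 ≤ i → i ≤ n → Nat.testBit x (i - 1) →
      π (BV.a i) = BV.b i ∧
      (i = 2 → π (BV.b 1) = BV.a 2 ∧ (¬ Nat.testBit x 0 → π (BV.a 1) = BV.a 2)) ∧
      (3 ≤ i → Nat.testBit x (i - 2) → π (BV.b (i - 1)) = BV.a i) ∧
      (3 ≤ i → ¬ Nat.testBit x (i - 2) →
        π (BV.b (i - 1)) = BV.b i ∧ π (BV.a (i - 1)) = BV.a i ∧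
        π (BV.b (i - 2)) = BV.a (i - 1) ∧
        (Lfun i x < i - 2 →
          ∀ j, Lfun i x + 1 ≤ j → j ≤ i - 2 →
            π (BV.a j) = BV.t ∧ π (BV.b (j - 1)) = BV.b j) ∧
        (Lfun i x = 1 → ¬ Nat.testBit x 0 → π (BV.a 1) = BV.t))

/-- Activating a list of edges in a policy, from left to right. -/
def activateList (π : BV → BV) (L : List (BV × BV)) : BV → BV :=
  L.foldl (fun σ e => Function.update σ e.1 e.2) π

/-- The canonical phases w.r.t. an odd number `x` (with `ℓ := ℓ_0(x)`), as a list of edges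
to be activated in order. -/
noncomputable def phaseList (n x : ℕ) : List (BV × BV) :=
  let ℓ := lzero x
  (if Nat.testBit x ℓ then [(BV.b ℓ, aN n (ℓ + 1))] else []) ++
  (if Nat.testBit x ℓ ∨ msb1 x < ℓ then [(BV.b (ℓ - 1), BV.b ℓ)] else []) ++
  [(BV.a ℓ, BV.b ℓ), (BV.t, BV.a ℓ)] ++
  ((List.range (ℓ - 2)).map fun j => (BV.a (j + 1), BV.t)) ++
  [(BV.a (ℓ - 1), BV.a ℓ)] ++
  (((List.range (ℓ - 3)).reverse).map fun j => (BV.b (j + 1), BV.b (j + 2))) ++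
  (if ℓ = 2 then [(BV.b 1, BV.a 2)] else [])

/-! ## The Markov decision process `𝔇_n` -/

/-- Vertices of `𝔇_n`: the original vertices (`base`), and for every edge `(v,w)` of `𝔅_n`
other than the self-loop, the gadget vertices `x v w`, `y v w`, `z v w`. -/
inductive DV : Type where
  | base : BV → DV
  | x : BV → BV → DV
  | y : BV → BV → DV
  | z : BV → BV → DV
deriving DecidableEq

/-- The edges of `𝔅_n` that get replaced by gadgets (all edges except the self-loop `(s,s)`). -/
def DEdgePair (n : ℕ) (v w : BV) : Prop := BEdge n v w ∧ v ≠ BV.s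

/-- The vertex set of `𝔇_n`. -/
def IsDVertex (n : ℕ) : DV → Prop
  | DV.base v => IsBVertex n v
  | DV.x v w => DEdgePair n v w
  | DV.y v w => DEdgePair n v w
  | DV.z v w => DEdgePair n v w

/-- The agent vertices of `𝔇_n` (all vertices except the randomization vertices `y v w`). -/
def IsDAgent (n : ℕ) : DV → Prop
  | DV.base v => IsBVertex n v
  | DV.x v w => DEdgePair n v w
  | DV.y _ _ => False
  | DV.z v w => DEdgePair n v w

/-- The agent edges of `𝔇_n`. -/
def DEdge (n : ℕ) (u u' : DV) : Prop :=
  (∃ v w, DEdgePair n v w ∧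
    ((u = DV.base v ∧ u' = DV.x v w) ∨ (u = DV.x v w ∧ u' = DV.base v) ∨
     (u = DV.x v w ∧ u' = DV.y v w) ∨ (u = DV.z v w ∧ u' = DV.base w))) ∨
  (u = DV.base BV.s ∧ u' = DV.base BV.s)

/-- The reward function of `𝔇_n`: the edge `(z v w, w)` carries the reward of the original
edge `(v,w)`; all other agent edges have reward `0`. -/
def rD (n : ℕ) (u u' : DV) : ℚ :=
  match u, u' with
  | DV.z v w, DV.base w' => if w' = w then rB n v w else 0
  | _, _ => 0

/-- A policy for `𝔇_n` chooses an outgoing agent edge at every agent vertex. -/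
def IsDPolicy (n : ℕ) (π : DV → DV) : Prop := ∀ u, IsDAgent n u → DEdge n u (π u)

/-- `IsDVal n p π V` says that `V` satisfies the Bellman equations characterizing the value
function of the policy `π` for `𝔇_n` with probabilities `p`, with `V s = 0`. -/
def IsDVal (n : ℕ) (p : BV → ℚ) (π : DV → DV) (V : DV → ℚ) : Prop :=
  V (DV.base BV.s) = 0 ∧
  (∀ u, IsDAgent n u → V u = rD n u (π u) + V (π u)) ∧
  (∀ v w, DEdgePair n v w →
    V (DV.y v w) = p v * V (DV.z v w) + (1 - p v) * V (DV.base v))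

open Classical in
/-- The value function of a (weak unichain) policy `π` for `𝔇_n`: the unique solution of the
Bellman equations (normalized to `0` outside the vertex set). -/
noncomputable def DVal (n : ℕ) (p : BV → ℚ) (π : DV → DV) : DV → ℚ :=
  if h : ∃! V : DV → ℚ, IsDVal n p π V ∧ ∀ u, ¬ IsDVertex n u → V u = 0 then
    h.exists.choose
  else fun _ => 0

/-- The reduced costs of an agent edge `(u,u')` of `𝔇_n` w.r.t. the policy `π`. -/
noncomputable def zD (n : ℕ) (p : BV → ℚ) (π : DV → DV) (u u' : DV) : ℚ :=
  rD n u u' + DVal n p π u' - DVal n p π u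

/-- An agent edge of `𝔇_n` is an improving switch if its reduced costs are positive. -/
def DImproving (n : ℕ) (p : BV → ℚ) (π : DV → DV) (u u' : DV) : Prop :=
  DEdge n u u' ∧ 0 < zD n p π u u'

/-- One (agent or positive-probability randomization) step of the process `𝔇_n` under `π`. -/
def DStep (n : ℕ) (p : BV → ℚ) (π : DV → DV) (u u' : DV) : Prop :=
  (IsDAgent n u ∧ u' = π u) ∨
  (∃ v w, DEdgePair n v w ∧ u = DV.y v w ∧
    ((u' = DV.z v w ∧ 0 < p v) ∨ (u' = DV.base v ∧ 0 < 1 - p v)))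

/-- A policy for `𝔇_n` is weak unichain if it reaches `s` with probability one from every
vertex, i.e. `s` is reachable via active/positive-probability steps from every vertex. -/
def DWeakUnichain (n : ℕ) (p : BV → ℚ) (π : DV → DV) : Prop :=
  ∀ u, IsDVertex n u → Relation.ReflTransGen (DStep n p π) u (DV.base BV.s)

/-- The twin policy of a policy `π` for `𝔅_n`: every vertex `v ≠ s` is `π v`-oriented. -/
def twin (π : BV → BV) : DV → DV := fun u =>
  match u with
  | DV.base v => if v = BV.s then DV.base BV.s else DV.x v (π v)
  | DV.x v w => if w = π v then DV.y v w else DV.base v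
  | DV.y v w => DV.y v w
  | DV.z _ w => DV.base w

/-- The vertex numbering `𝒩_V` of `𝔅_n`: the order `(t, a 1, b 1, a 2, b 2, …, a n, b n, d, s)`. -/
def NV (n : ℕ) : BV → ℕ
  | BV.t => 1
  | BV.a i => 2 * i
  | BV.b i => 2 * i + 1
  | BV.d => 2 * n + 2
  | BV.s => 2 * n + 3

/-- The specific probabilities `p_v = 2^{-𝒩_V(v)·(n+5)}`. -/
noncomputable def pSpec (n : ℕ) (v : BV) : ℚ := (2 : ℚ) ^ (-((NV n v * (n + 5) : ℕ) : ℤ))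

/-- The set `B(v)` of agent edges of `𝔇_n` belonging to the vertex `v`. -/
def Belongs (n : ℕ) (v : BV) (e : DV × DV) : Prop :=
  ∃ w, DEdgePair n v w ∧
    (e = (DV.x v w, DV.y v w) ∨ e = (DV.base v, DV.x v w) ∨ e = (DV.x v w, DV.base v))

/-- Applying the improving switch `e` to the policy `π` yields `π'`. -/
def DApply (n : ℕ) (p : BV → ℚ) (π : DV → DV) (e : DV × DV) (π' : DV → DV) : Prop :=
  DImproving n p π e.1 e.2 ∧ π' = Function.update π e.1 e.2

/-- One step of Bland's policy iteration on `𝔇_n` with edge numbering `N`. -/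
def IsBlandStepD (n : ℕ) (p : BV → ℚ) (N : DV → DV → ℕ) (π π' : DV → DV) : Prop :=
  ∃ u u', DImproving n p π u u' ∧ (∀ a b, DImproving n p π a b → N u u' ≤ N a b) ∧
    π' = Function.update π u u'

/-- One step of Dantzig's policy iteration on `𝔇_n`: apply an improving switch of maximal
reduced costs. -/
def DantzigStep (n : ℕ) (p : BV → ℚ) (π π' : DV → DV) : Prop :=
  ∃ u u', DImproving n p π u u' ∧
    (∀ a b, DImproving n p π a b → zD n p π a b ≤ zD n p π u u') ∧
    π' = Function.update π u u'

/-- The finite set of vertices of `𝔅_n`, as a `Finset`. -/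
noncomputable def BVSet (n : ℕ) : Finset BV :=
  {BV.t, BV.d, BV.s} ∪ (Finset.Icc 1 n).image BV.a ∪ (Finset.Icc 1 n).image BV.b

/-- The finite set of agent vertices of `𝔇_n`, as a `Finset`. -/
noncomputable def DAgentSet (n : ℕ) : Finset DV := by
  classical
  exact ((BVSet n).image DV.base) ∪
    (((BVSet n ×ˢ BVSet n).filter fun e => DEdgePair n e.1 e.2).image fun e => DV.x e.1 e.2) ∪
    (((BVSet n ×ˢ BVSet n).filter fun e => DEdgePair n e.1 e.2).image fun e => DV.z e.1 e.2)

/-- The objective of the Largest Increase rule: the sum of the values of all agent vertices. -/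
noncomputable def LIobj (n : ℕ) (p : BV → ℚ) (π : DV → DV) : ℚ :=
  ∑ u ∈ DAgentSet n, DVal n p π u

/-- One step of the Largest Increase policy iteration on `𝔇_n`: apply an improving switch
maximizing the sum of all agent vertex values of the resulting policy. -/
def LIStep (n : ℕ) (p : BV → ℚ) (π π' : DV → DV) : Prop :=
  ∃ u u', DImproving n p π u u' ∧
    (∀ a b, DImproving n p π a b →
      LIobj n p (Function.update π a b) ≤ LIobj n p (Function.update π u u')) ∧
    π' = Function.update π u u'

/-- `N` is a Bland numbering `𝒩_{𝔇_n}` for `𝔇_n`: it is injective on agent edges, the edges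
`(x v w, v)` all come first, within each gadget `(x v w, y v w)` precedes `(v, x v w)`,
the gadget blocks are ordered according to `𝒩_{𝔅_n}`, and the self-loop comes last. -/
def IsDBlandNumbering (n : ℕ) (N : DV → DV → ℕ) : Prop :=
  (∀ u₁ u₂ u₁' u₂', DEdge n u₁ u₂ → DEdge n u₁' u₂' → N u₁ u₂ = N u₁' u₂' →
    u₁ = u₁' ∧ u₂ = u₂') ∧
  (∀ v w v' w', DEdgePair n v w → DEdgePair n v' w' →
    N (DV.x v w) (DV.base v) < N (DV.x v' w') (DV.y v' w')) ∧
  (∀ v w, DEdgePair n v w → N (DV.x v w) (DV.y v w) < N (DV.base v) (DV.x v w)) ∧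
  (∀ v w v' w', DEdgePair n v w → DEdgePair n v' w' → NB n v w < NB n v' w' →
    N (DV.base v) (DV.x v w) < N (DV.x v' w') (DV.y v' w')) ∧
  (∀ v w, DEdgePair n v w → N (DV.base v) (DV.x v w) < N (DV.base BV.s) (DV.base BV.s))

/-! Reaching the sink with probability one forces every vertex `v ≠ s` of `𝔅_n` to be oriented:
if `π` moves from `v` to `x_{v,w}`, it must go on to `y_{v,w}` instead of returning to `v`. So `π`
follows a weak unichain policy `σ` for `𝔅_n`, the gadgets only delay it, and `Val_π` is an explicit
function of `Val_σ`. Every reduced cost on `B(v)` is then `0` or `± p_v · z_σ(v,w)`.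

All rewards are multiples of `1/4`, hence so is `z_σ(v,w)`, which gives the lower bound. For the
upper bound, `Val_σ` is at most the optimal value function, which is below `2^(n+1)`, and at least
`-2^n`, because a path to the sink visits `t` at most once and so pays for at most one boarding. -/

theorem abs_le_abs_of_mem_zmultiples {G : Type*} [AddCommGroup G] [LinearOrder G]
    [IsOrderedAddMonoid G] {a b : G} (hb : b ∈ AddSubgroup.zmultiples a) (hb0 : b ≠ 0) :
    |a| ≤ |b| := by
  obtain ⟨k, rfl⟩ := AddSubgroup.mem_zmultiples_iff.1 hb
  have hk : k ≠ 0 := fun h => hb0 (by rw [h, zero_zsmul])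
  calc |a| = (1 : ℤ) • |a| := (one_zsmul _).symm
    _ ≤ |k| • |a| := zsmul_le_zsmul_left (abs_nonneg a) (Int.one_le_abs hk)
    _ = |k • a| := (abs_zsmul k a).symm

theorem injOn_iterate_of_first_hit {α : Type*} {f : α → α} {x s : α} {N : ℕ} (hN : f^[N] x = s)
    (hmin : ∀ k < N, f^[k] x ≠ s) : Set.InjOn (fun i => f^[i] x) (Set.Iic N) := by
  have ne_of_lt {i j : ℕ} (hij : i < j) (hj : j ≤ N) : f^[i] x ≠ f^[j] x := fun h =>
    hmin (N - j + i) (by omega) <| by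
      rw [Function.iterate_add_apply, h, ← Function.iterate_add_apply, Nat.sub_add_cancel hj, hN]
  intro i hi j hj h
  rcases lt_trichotomy i j with hij | hij | hij
  · exact absurd h (ne_of_lt hij hj)
  · exact hij
  · exact absurd h.symm (ne_of_lt hij hi)

/-! ### Rewards and the potential -/

theorem rB_mem_zmultiples (n : ℕ) (u v : BV) :
    rB n u v ∈ AddSubgroup.zmultiples (1 / 4 : ℚ) := by
  rw [AddSubgroup.mem_zmultiples_iff]
  unfold rB
  split
  · split_ifs
    · exact ⟨4 * 2 ^ _, by rw [zsmul_eq_mul]; push_cast; ring⟩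
    · exact ⟨0, zero_zsmul _⟩
  · exact ⟨-(4 * 2 ^ _) + 5, by rw [zsmul_eq_mul]; push_cast; ring⟩
  · split_ifs
    · exact ⟨3, by norm_num⟩
    · exact ⟨0, zero_zsmul _⟩
  · split_ifs
    · exact ⟨3, by norm_num⟩
    · exact ⟨0, zero_zsmul _⟩
  · exact ⟨0, zero_zsmul _⟩

theorem rB_nonneg (n : ℕ) (u : BV) {v : BV} (hv : v ≠ BV.t) : 0 ≤ rB n u v := by
  unfold rB
  split
  · split_ifs <;> positivity
  · exact absurd rfl hv
  · split_ifs <;> norm_num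
  · split_ifs <;> norm_num
  · exact le_rfl

theorem neg_two_pow_le_rB {n : ℕ} {u : BV} (hu : IsBVertex n u) (v : BV) :
    -2 ^ n ≤ rB n u v := by
  have hn : (0 : ℚ) ≤ 2 ^ n := by positivity
  by_cases hv : v = BV.t
  · subst hv
    cases u with
    | a i =>
      have : (2 : ℚ) ^ i ≤ 2 ^ n := pow_le_pow_right₀ one_le_two hu.2
      simp only [rB]
      linarith
    | t | s | d | b i => simp [rB]
  · linarith [rB_nonneg n u hv]

/-- The value function of the optimal policy `piStar n` on the vertices of `𝔅_n`. It serves as a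
potential: no edge has positive reduced costs with respect to it. -/
def potential (n : ℕ) : BV → ℚ
  | BV.t => 2 ^ (n + 1) - 2 + 3 / 4
  | BV.s => 0
  | BV.d => 0
  | BV.a i => 2 ^ (n + 1) - 2 ^ i + 3 / 4
  | BV.b i => 2 ^ (n + 1) - 2 ^ (i + 1) + 3 / 4

theorem potential_le (n : ℕ) (v : BV) : potential n v ≤ 2 ^ (n + 1) := by
  have one_le_two_pow (k : ℕ) : (1 : ℚ) ≤ 2 ^ k := one_le_pow₀ one_le_two
  have hn := one_le_two_pow (n + 1)
  cases v with
  | t | s | d => simp only [potential]; linarith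
  | a i => simp only [potential]; linarith [one_le_two_pow i]
  | b i => simp only [potential]; linarith [one_le_two_pow (i + 1)]

theorem potential_aN_succ_le (n i : ℕ) :
    potential n (aN n (i + 1)) ≤ 2 ^ (n + 1) - 2 ^ (i + 1) + 3 / 4 := by
  unfold aN
  split_ifs with h
  · rw [h, potential]; norm_num
  · exact le_rfl

theorem BEdge.rB_add_potential_le {n : ℕ} {u v : BV} (h : BEdge n u v) :
    rB n u v + potential n v ≤ potential n u := by
  have two_le {i : ℕ} (hi : 1 ≤ i) : (2 : ℚ) ≤ 2 ^ i := le_self_pow₀ one_le_two (by omega)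
  have rB_aN (i j : ℕ) : rB n (BV.a i) (aN n j) = 0 ∧ rB n (BV.b i) (aN n j) = 0 := by
    unfold aN; split_ifs <;> exact ⟨rfl, rfl⟩
  rcases h with ⟨i, hi, -, rfl, rfl⟩ | ⟨i, -, -, rfl, rfl⟩ | ⟨i, hi, -, rfl, rfl⟩ |
    ⟨i, -, -, rfl, rfl⟩ | ⟨i, hi, -, rfl, rfl⟩ | ⟨i, -, -, rfl, rfl⟩ | ⟨rfl, rfl⟩ | ⟨rfl, rfl⟩
  · simp only [rB, potential]; linarith [two_le hi]
  · simp only [rB, potential, if_true, pow_succ]; linarith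
  · have := potential_aN_succ_le n i
    rw [(rB_aN i _).1, potential]
    linarith [two_le hi, pow_succ (2 : ℚ) i]
  · simp only [rB, potential]; linarith
  · unfold bN
    split_ifs with hin
    · obtain rfl : i = n := by omega
      simp [rB, potential]
    · simp only [rB, potential, if_true, pow_succ]; linarith [two_le hi]
  · rw [(rB_aN i _).2, zero_add]
    exact potential_aN_succ_le n i
  · simp [rB, potential]
  · simp [rB, potential]

theorem BEdge.isBVertex_left {n : ℕ} {u v : BV} (h : BEdge n u v) : IsBVertex n u := by
  rcases h with ⟨i, -, -, rfl, -⟩ | ⟨i, h₁, h₂, rfl, -⟩ | ⟨i, h₁, h₂, rfl, -⟩ |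
    ⟨i, h₁, h₂, rfl, -⟩ | ⟨i, h₁, h₂, rfl, -⟩ | ⟨i, h₁, h₂, rfl, -⟩ | ⟨rfl, -⟩ | ⟨rfl, -⟩
  exacts [trivial, ⟨h₁, h₂⟩, ⟨h₁, h₂⟩, ⟨h₁, h₂⟩, ⟨h₁, h₂⟩, ⟨h₁, h₂⟩, trivial, trivial]

theorem isBVertex_aN_succ {n i : ℕ} (hi : i ≤ n) : IsBVertex n (aN n (i + 1)) := by
  unfold aN
  split_ifs
  · trivial
  · exact ⟨by omega, by omega⟩

theorem isBVertex_bN_succ {n i : ℕ} (hi : i ≤ n) : IsBVertex n (bN n (i + 1)) := by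
  unfold bN
  split_ifs
  · trivial
  · exact ⟨by omega, by omega⟩

theorem BEdge.isBVertex_right {n : ℕ} {u v : BV} (h : BEdge n u v) : IsBVertex n v := by
  rcases h with ⟨i, h₁, h₂, -, rfl⟩ | ⟨i, h₁, h₂, -, rfl⟩ | ⟨i, -, h₂, -, rfl⟩ |
    ⟨i, -, -, -, rfl⟩ | ⟨i, -, h₂, -, rfl⟩ | ⟨i, -, h₂, -, rfl⟩ | ⟨-, rfl⟩ | ⟨-, rfl⟩
  exacts [⟨h₁, h₂⟩, ⟨h₁, h₂⟩, isBVertex_aN_succ h₂, trivial, isBVertex_bN_succ h₂,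
    isBVertex_aN_succ h₂, trivial, trivial]

/-! ### Values of weak unichain policies for `𝔅_n` -/

section BPolicy

variable {n : ℕ} {σ : BV → BV}

theorem bVal_sink (n : ℕ) (σ : BV → BV) : BVal n σ BV.s = 0 := by
  have h : ∃ k, σ^[k] BV.s = BV.s := ⟨0, rfl⟩
  rw [BVal, dif_pos h, (Nat.find_eq_zero h).2 rfl, Finset.sum_range_zero]

theorem BWeakUnichain.bVal_eq (hwu : BWeakUnichain n σ) {v : BV} (hv : IsBVertex n v)
    (hvs : v ≠ BV.s) : BVal n σ v = rB n v (σ v) + BVal n σ (σ v) := by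
  classical
  have hv_hits : ∃ k, σ^[k] v = BV.s := hwu v hv
  have hσv_hits : ∃ k, σ^[k] (σ v) = BV.s := by
    obtain ⟨_ | k, hk⟩ := hv_hits
    · exact absurd hk hvs
    · exact ⟨k, hk⟩
  have hfind : Nat.find hv_hits = Nat.find hσv_hits + 1 :=
    Nat.find_comp_succ hv_hits hσv_hits hvs
  rw [BVal, dif_pos hv_hits, BVal, dif_pos hσv_hits, hfind, Finset.sum_range_succ', add_comm]
  rfl

theorem BWeakUnichain.zB_apply (hwu : BWeakUnichain n σ) {v : BV} (hv : IsBVertex n v)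
    (hvs : v ≠ BV.s) : zB n σ v (σ v) = 0 := by
  rw [zB, hwu.bVal_eq hv hvs, sub_self]

theorem IsBPolicy.isBVertex_iterate (hσ : IsBPolicy n σ) {v : BV} (hv : IsBVertex n v) (k : ℕ) :
    IsBVertex n (σ^[k] v) := by
  induction k with
  | zero => exact hv
  | succ k ih =>
    rw [Function.iterate_succ_apply']
    exact (hσ _ ih).isBVertex_right

@[elab_as_elim]
theorem BWeakUnichain.induction_on (hwu : BWeakUnichain n σ) (hσ : IsBPolicy n σ)
    {motive : BV → Prop} {v : BV} (hv : IsBVertex n v) (sink : motive BV.s)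
    (step : ∀ v, IsBVertex n v → v ≠ BV.s → motive (σ v) → motive v) : motive v := by
  obtain ⟨k, hk⟩ := hwu v hv
  induction k generalizing v with
  | zero => exact (show v = BV.s from hk) ▸ sink
  | succ k ih =>
    by_cases hvs : v = BV.s
    · exact hvs ▸ sink
    · exact step v hv hvs (ih (hσ v hv).isBVertex_right hk)

theorem BWeakUnichain.bVal_mem_zmultiples (hwu : BWeakUnichain n σ) (hσ : IsBPolicy n σ) {v : BV}
    (hv : IsBVertex n v) : BVal n σ v ∈ AddSubgroup.zmultiples (1 / 4 : ℚ) := by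
  refine hwu.induction_on hσ hv ?_ fun v hv hvs ih => ?_
  · rw [bVal_sink]
    exact zero_mem _
  · rw [hwu.bVal_eq hv hvs]
    exact add_mem (rB_mem_zmultiples n v _) ih

theorem BWeakUnichain.bVal_le_potential (hwu : BWeakUnichain n σ) (hσ : IsBPolicy n σ) {v : BV}
    (hv : IsBVertex n v) : BVal n σ v ≤ potential n v := by
  refine hwu.induction_on hσ hv (bVal_sink n σ).le fun v hv hvs ih => ?_
  calc BVal n σ v = rB n v (σ v) + BVal n σ (σ v) := hwu.bVal_eq hv hvs
    _ ≤ rB n v (σ v) + potential n (σ v) := by gcongr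
    _ ≤ potential n v := (hσ v hv).rB_add_potential_le

theorem BWeakUnichain.neg_two_pow_le_bVal (hwu : BWeakUnichain n σ) (hσ : IsBPolicy n σ) {v : BV}
    (hv : IsBVertex n v) : -2 ^ n ≤ BVal n σ v := by
  classical
  have hits : ∃ k, σ^[k] v = BV.s := hwu v hv
  have inj : Set.InjOn (fun i => σ^[i + 1] v) (Finset.range (Nat.find hits)) := by
    intro i hi j hj h
    have := injOn_iterate_of_first_hit (Nat.find_spec hits) (fun _ => Nat.find_min hits)
      (Finset.mem_range.1 hi) (Finset.mem_range.1 hj) h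
    omega
  have hn : (0 : ℚ) ≤ 2 ^ n := by positivity
  calc (-2 ^ n : ℚ)
      ≤ ∑ w ∈ (Finset.range (Nat.find hits)).image fun i => σ^[i + 1] v,
          if w = BV.t then -2 ^ n else 0 := by
        rw [Finset.sum_ite_eq']
        split_ifs <;> linarith
    _ = ∑ i ∈ Finset.range (Nat.find hits), if σ^[i + 1] v = BV.t then -2 ^ n else 0 :=
        Finset.sum_image inj
    _ ≤ ∑ i ∈ Finset.range (Nat.find hits), rB n (σ^[i] v) (σ^[i + 1] v) :=
        Finset.sum_le_sum fun i _ => by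
          split_ifs with ht
          · exact neg_two_pow_le_rB (hσ.isBVertex_iterate hv i) _
          · exact rB_nonneg n _ ht
    _ = BVal n σ v := by rw [BVal, dif_pos hits]

theorem BWeakUnichain.abs_zB_le (hwu : BWeakUnichain n σ) (hσ : IsBPolicy n σ) {u v : BV}
    (h : BEdge n u v) : |zB n σ u v| ≤ 2 ^ (n + 2) := by
  have hn : (0 : ℚ) ≤ 2 ^ n := by positivity
  have hu := h.isBVertex_left
  have hv := h.isBVertex_right
  have lower_u := hwu.neg_two_pow_le_bVal hσ hu
  have lower_v := hwu.neg_two_pow_le_bVal hσ hv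
  have upper_u := hwu.bVal_le_potential hσ hu
  have upper_v := hwu.bVal_le_potential hσ hv
  have reward_lower := neg_two_pow_le_rB hu v
  have reward_upper := h.rB_add_potential_le
  have potential_u := potential_le n u
  rw [abs_le, zB]
  rw [pow_succ] at potential_u
  rw [pow_succ, pow_succ]
  constructor <;> linarith

theorem BWeakUnichain.one_div_four_le_abs_zB (hwu : BWeakUnichain n σ) (hσ : IsBPolicy n σ)
    {u v : BV} (h : BEdge n u v) (hz : zB n σ u v ≠ 0) : 1 / 4 ≤ |zB n σ u v| := by
  have hmem : zB n σ u v ∈ AddSubgroup.zmultiples (1 / 4 : ℚ) :=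
    sub_mem (add_mem (rB_mem_zmultiples n u v) (hwu.bVal_mem_zmultiples hσ h.isBVertex_right))
      (hwu.bVal_mem_zmultiples hσ h.isBVertex_left)
  simpa using abs_le_abs_of_mem_zmultiples hmem hz

end BPolicy

/-! ### The `𝔅_n`-policy followed by a policy for `𝔇_n` -/

/-- The policy for `𝔅_n` followed by a policy `π` for `𝔇_n`: it moves from `v` to `w` if `π` moves
from `v` to `x_{v,w}`. The default value `s` makes it stay at `s`, where there is no gadget. -/
def orientation (π : DV → DV) (v : BV) : BV :=
  match π (DV.base v) with
  | DV.x _ w => w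
  | _ => BV.s

section DPolicy

variable {n : ℕ} {p : BV → ℚ} {π : DV → DV}

theorem IsDPolicy.apply_sink (hπ : IsDPolicy n π) : π (DV.base BV.s) = DV.base BV.s := by
  have h : DEdge n (DV.base BV.s) (π (DV.base BV.s)) := hπ (DV.base BV.s) trivial
  simpa [DEdge, DEdgePair] using h

theorem IsDPolicy.exists_apply_base (hπ : IsDPolicy n π) {v : BV} (hv : IsBVertex n v)
    (hvs : v ≠ BV.s) : ∃ w, DEdgePair n v w ∧ π (DV.base v) = DV.x v w := by
  have h : DEdge n (DV.base v) (π (DV.base v)) := hπ (DV.base v) hv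
  simpa [DEdge, hvs] using h

theorem IsDPolicy.apply_x (hπ : IsDPolicy n π) {v w : BV} (h : DEdgePair n v w) :
    π (DV.x v w) = DV.base v ∨ π (DV.x v w) = DV.y v w := by
  have h' : DEdge n (DV.x v w) (π (DV.x v w)) := hπ (DV.x v w) h
  simpa [DEdge, h, ← and_or_left] using h'

theorem IsDPolicy.apply_z (hπ : IsDPolicy n π) {v w : BV} (h : DEdgePair n v w) :
    π (DV.z v w) = DV.base w := by
  have h' : DEdge n (DV.z v w) (π (DV.z v w)) := hπ (DV.z v w) h
  simpa [DEdge, h] using h'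

theorem IsDPolicy.orientation_sink (hπ : IsDPolicy n π) : orientation π BV.s = BV.s := by
  rw [orientation, hπ.apply_sink]

theorem IsDPolicy.apply_base (hπ : IsDPolicy n π) {v : BV} (hv : IsBVertex n v)
    (hvs : v ≠ BV.s) : π (DV.base v) = DV.x v (orientation π v) := by
  obtain ⟨w, -, hw⟩ := hπ.exists_apply_base hv hvs
  rw [orientation, hw]

theorem IsDPolicy.dEdgePair_orientation (hπ : IsDPolicy n π) {v : BV} (hv : IsBVertex n v)
    (hvs : v ≠ BV.s) : DEdgePair n v (orientation π v) := by
  obtain ⟨w, hvw, hw⟩ := hπ.exists_apply_base hv hvs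
  rwa [orientation, hw]

theorem IsDPolicy.isBPolicy_orientation (hπ : IsDPolicy n π) : IsBPolicy n (orientation π) := by
  intro v hv
  by_cases hvs : v = BV.s
  · subst hvs
    rw [hπ.orientation_sink]
    simp [BEdge]
  · exact (hπ.dEdgePair_orientation hv hvs).1

theorem DWeakUnichain.apply_x_orientation (hwu : DWeakUnichain n p π) (hπ : IsDPolicy n π)
    {v : BV} (hv : IsBVertex n v) (hvs : v ≠ BV.s) :
    π (DV.x v (orientation π v)) = DV.y v (orientation π v) := by
  refine (hπ.apply_x (hπ.dEdgePair_orientation hv hvs)).resolve_left fun hback => ?_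
  have trapped : ∀ u, Relation.ReflTransGen (DStep n p π) (DV.base v) u →
      u = DV.base v ∨ u = DV.x v (orientation π v) := by
    intro u hu
    induction hu with
    | refl => exact Or.inl rfl
    | tail _ hstep ih =>
      rcases hstep with ⟨-, rfl⟩ | ⟨v', w', -, rfl, -⟩
      · rcases ih with rfl | rfl
        · exact Or.inr (hπ.apply_base hv hvs)
        · exact Or.inl hback
      · simp at ih
  simpa [hvs.symm] using trapped _ (hwu (DV.base v) hv)

theorem DWeakUnichain.bWeakUnichain_orientation (hwu : DWeakUnichain n p π)
    (hπ : IsDPolicy n π) : BWeakUnichain n (orientation π) := by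
  let Hits (v : BV) : Prop := ∃ k, (orientation π)^[k] v = BV.s
  have hits_of_step {v : BV} : Hits (orientation π v) → Hits v := fun ⟨k, hk⟩ => ⟨k + 1, hk⟩
  -- Inside a gadget that `π` does not enter from `v`, reaching `s` says nothing about `v`.
  let Good : DV → Prop
    | DV.base v => Hits v
    | DV.x v w => w = orientation π v → Hits v
    | DV.y v w => w = orientation π v → Hits v
    | DV.z _ w => Hits w
  suffices good : ∀ u, Relation.ReflTransGen (DStep n p π) u (DV.base BV.s) → Good u from
    fun v hv => good _ (hwu (DV.base v) hv)
  intro u hu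
  induction hu using Relation.ReflTransGen.head_induction_on with
  | refl => exact ⟨0, rfl⟩
  | @head u u' hstep _ ih =>
    rcases hstep with ⟨hagent, rfl⟩ | ⟨v, w, -, rfl, ⟨rfl, -⟩ | ⟨rfl, -⟩⟩
    · cases u with
      | base v =>
        by_cases hvs : v = BV.s
        · exact ⟨0, hvs⟩
        · rw [hπ.apply_base hagent hvs] at ih
          exact ih rfl
      | x v w =>
        intro hw
        rcases hπ.apply_x hagent with hx | hx <;> rw [hx] at ih
        · exact ih
        · exact ih hw
      | y v w => exact hagent.elim
      | z v w =>
        rw [hπ.apply_z hagent] at ih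
        exact ih
    · rintro rfl
      exact hits_of_step ih
    · exact fun _ => ih

/-! ### The value function of a weak unichain policy for `𝔇_n` -/

/-- The value function of a weak unichain policy `π` for `𝔇_n` in closed form, in terms of the
values and reduced costs of the policy `orientation π` for `𝔅_n`. -/
noncomputable def gadgetVal (n : ℕ) (p : BV → ℚ) (π : DV → DV) : DV → ℚ
  | DV.base v => BVal n (orientation π) v
  | DV.x v w => BVal n (orientation π) v +
      if π (DV.x v w) = DV.y v w then p v * zB n (orientation π) v w else 0
  | DV.y v w => BVal n (orientation π) v + p v * zB n (orientation π) v w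
  | DV.z v w => rB n v w + BVal n (orientation π) w

theorem DWeakUnichain.isDVal_gadgetVal (hwu : DWeakUnichain n p π) (hπ : IsDPolicy n π) :
    IsDVal n p π (gadgetVal n p π) := by
  refine ⟨bVal_sink n _, fun u hu => ?_, fun v w _ => ?_⟩
  · cases u with
    | base v =>
      by_cases hvs : v = BV.s
      · subst hvs
        simp [hπ.apply_sink, rD]
      · rw [hπ.apply_base hu hvs]
        simp [gadgetVal, rD, (hwu.bWeakUnichain_orientation hπ).zB_apply hu hvs]
    | x v w => rcases hπ.apply_x hu with hx | hx <;> simp [hx, gadgetVal, rD]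
    | y v w => exact hu.elim
    | z v w => simp [hπ.apply_z hu, gadgetVal, rD]
  · simp only [gadgetVal, zB]
    ring

theorem IsDVal.base_eq_bVal {V : DV → ℚ} (hV : IsDVal n p π V)
    (hp : ∀ v, IsBVertex n v → v ≠ BV.s → p v ≠ 0) (hπ : IsDPolicy n π)
    (hwu : DWeakUnichain n p π) {v : BV} (hv : IsBVertex n v) :
    V (DV.base v) = BVal n (orientation π) v := by
  obtain ⟨hV_sink, hV_agent, hV_random⟩ := hV
  have hσwu := hwu.bWeakUnichain_orientation hπ
  refine hσwu.induction_on hπ.isBPolicy_orientation hv (hV_sink.trans (bVal_sink n _).symm) ?_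
  intro v hv hvs ih
  have edge := hπ.dEdgePair_orientation hv hvs
  have base_eq := hV_agent (DV.base v) hv
  have x_eq := hV_agent (DV.x v (orientation π v)) edge
  have z_eq := hV_agent (DV.z v (orientation π v)) edge
  have y_eq := hV_random v (orientation π v) edge
  simp only [hπ.apply_base hv hvs, rD, zero_add] at base_eq
  simp only [hwu.apply_x_orientation hπ hv hvs, rD, zero_add] at x_eq
  simp only [hπ.apply_z edge, rD, if_true] at z_eq
  have base_eq_z : V (DV.base v) = V (DV.z v (orientation π v)) :=
    mul_left_cancel₀ (hp v hv hvs) (by linarith)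
  rw [base_eq_z, z_eq, ih, hσwu.bVal_eq hv hvs]

theorem IsDVal.eq_gadgetVal {V : DV → ℚ} (hV : IsDVal n p π V)
    (hp : ∀ v, IsBVertex n v → v ≠ BV.s → p v ≠ 0) (hπ : IsDPolicy n π)
    (hwu : DWeakUnichain n p π) {u : DV} (hu : IsDVertex n u) : V u = gadgetVal n p π u := by
  have base_eq {v : BV} (hv : IsBVertex n v) := hV.base_eq_bVal hp hπ hwu hv
  have z_eq {v w : BV} (h : DEdgePair n v w) : V (DV.z v w) = gadgetVal n p π (DV.z v w) := by
    rw [hV.2.1 (DV.z v w) h, hπ.apply_z h, base_eq h.1.isBVertex_right]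
    simp [rD, gadgetVal]
  have y_eq {v w : BV} (h : DEdgePair n v w) : V (DV.y v w) = gadgetVal n p π (DV.y v w) := by
    rw [hV.2.2 v w h, z_eq h, base_eq h.1.isBVertex_left]
    simp only [gadgetVal, zB]
    ring
  cases u with
  | base v => exact base_eq hu
  | x v w =>
    rw [hV.2.1 (DV.x v w) hu]
    rcases hπ.apply_x hu with hx | hx <;> rw [hx]
    · simp [base_eq hu.1.isBVertex_left, hx, gadgetVal, rD]
    · simp [y_eq hu, hx, gadgetVal, rD]
  | y v w => exact y_eq hu
  | z v w => exact z_eq hu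

theorem IsDAgent.isDVertex {u : DV} (hu : IsDAgent n u) : IsDVertex n u := by
  cases u with
  | y => exact hu.elim
  | base | x | z => exact hu

theorem DEdge.isDVertex_right {u u' : DV} (h : DEdge n u u') : IsDVertex n u' := by
  rcases h with ⟨v, w, h, ⟨-, rfl⟩ | ⟨-, rfl⟩ | ⟨-, rfl⟩ | ⟨-, rfl⟩⟩ | ⟨-, rfl⟩
  exacts [h, h.1.isBVertex_left, h, h.1.isBVertex_right, trivial]

theorem IsDVal.indicator {V : DV → ℚ} (hV : IsDVal n p π V) (hπ : IsDPolicy n π) :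
    IsDVal n p π ({u | IsDVertex n u}.indicator V) := by
  have eq_on (u : DV) (hu : IsDVertex n u) : {u | IsDVertex n u}.indicator V u = V u :=
    Set.indicator_of_mem (s := {u | IsDVertex n u}) hu V
  refine ⟨?_, fun u hu => ?_, fun v w h => ?_⟩
  · rw [eq_on (DV.base BV.s) trivial, hV.1]
  · rw [eq_on u hu.isDVertex, eq_on (π u) (hπ u hu).isDVertex_right, ← hV.2.1 u hu]
  · rw [eq_on (DV.y v w) h, eq_on (DV.z v w) h, eq_on (DV.base v) h.1.isBVertex_left, hV.2.2 v w h]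

theorem DWeakUnichain.existsUnique_isDVal (hwu : DWeakUnichain n p π)
    (hp : ∀ v, IsBVertex n v → v ≠ BV.s → p v ≠ 0) (hπ : IsDPolicy n π) :
    ∃! V : DV → ℚ, IsDVal n p π V ∧ ∀ u, ¬ IsDVertex n u → V u = 0 := by
  let vertices : Set DV := {u | IsDVertex n u}
  refine ⟨vertices.indicator (gadgetVal n p π),
    ⟨(hwu.isDVal_gadgetVal hπ).indicator hπ, fun u (hu : u ∉ vertices) =>
      Set.indicator_of_notMem hu _⟩, ?_⟩
  rintro V ⟨hV, hV_zero⟩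
  funext u
  by_cases hu : u ∈ vertices
  · rw [hV.eq_gadgetVal hp hπ hwu hu, Set.indicator_of_mem hu]
  · rw [hV_zero u hu, Set.indicator_of_notMem hu]

theorem DWeakUnichain.dVal_eq_gadgetVal (hwu : DWeakUnichain n p π)
    (hp : ∀ v, IsBVertex n v → v ≠ BV.s → p v ≠ 0) (hπ : IsDPolicy n π) {u : DV}
    (hu : IsDVertex n u) : DVal n p π u = gadgetVal n p π u := by
  have hex := hwu.existsUnique_isDVal hp hπ
  have hV : IsDVal n p π (DVal n p π) := by
    rw [DVal, dif_pos hex]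
    exact hex.exists.choose_spec.1
  exact hV.eq_gadgetVal hp hπ hwu hu

/-! ### Reduced costs -/

theorem DWeakUnichain.exists_zD_eq_of_belongs (hwu : DWeakUnichain n p π)
    (hp : ∀ v, IsBVertex n v → v ≠ BV.s → p v ≠ 0) (hπ : IsDPolicy n π) {v : BV} {e : DV × DV}
    (he : Belongs n v e) :
    ∃ w, DEdgePair n v w ∧ (zD n p π e.1 e.2 = 0 ∨
      zD n p π e.1 e.2 = p v * zB n (orientation π) v w ∨
      zD n p π e.1 e.2 = -(p v * zB n (orientation π) v w)) := by
  obtain ⟨w, h, he⟩ := he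
  have base_val := hwu.dVal_eq_gadgetVal hp hπ (u := DV.base v) h.1.isBVertex_left
  have x_val := hwu.dVal_eq_gadgetVal hp hπ (u := DV.x v w) h
  have y_val := hwu.dVal_eq_gadgetVal hp hπ (u := DV.y v w) h
  refine ⟨w, h, ?_⟩
  rcases he with rfl | rfl | rfl <;> by_cases hx : π (DV.x v w) = DV.y v w <;>
    simp [zD, rD, gadgetVal, base_val, x_val, y_val, hx]

end DPolicy

theorem stmt14_general {n : ℕ} {p : BV → ℚ}
    (hp : ∀ v, IsBVertex n v → v ≠ BV.s → 0 < p v ∧ p v ≤ 1)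
    {v : BV} {e : DV × DV} (he : Belongs n v e)
    {π : DV → DV} (hπ : IsDPolicy n π) (hwu : DWeakUnichain n p π)
    (himp : DImproving n p π e.1 e.2) :
    p v / 4 ≤ zD n p π e.1 e.2 ∧ zD n p π e.1 e.2 ≤ p v * 2 ^ (n + 2) := by
  have hp_ne (v : BV) (hv : IsBVertex n v) (hvs : v ≠ BV.s) : p v ≠ 0 := (hp v hv hvs).1.ne'
  obtain ⟨w, h, hz⟩ := hwu.exists_zD_eq_of_belongs hp_ne hπ he
  have hpos : 0 < zD n p π e.1 e.2 := himp.2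
  have hpv : 0 < p v := (hp v h.1.isBVertex_left h.2).1
  have zD_eq : zD n p π e.1 e.2 = p v * |zB n (orientation π) v w| := by
    rw [← abs_of_pos hpv, ← abs_mul, ← abs_of_pos hpos]
    rcases hz with hz | hz | hz
    · exact absurd hz hpos.ne'
    · rw [hz]
    · rw [hz, abs_neg]
  have hzB : zB n (orientation π) v w ≠ 0 := by
    intro h0
    rw [zD_eq, h0, abs_zero, mul_zero] at hpos
    exact hpos.false
  have hσ := hπ.isBPolicy_orientation
  have hσwu := hwu.bWeakUnichain_orientation hπ
  rw [zD_eq, div_eq_mul_one_div]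
  exact ⟨mul_le_mul_of_nonneg_left (hσwu.one_div_four_le_abs_zB hσ h.1 hzB) hpv.le,
    mul_le_mul_of_nonneg_left (hσwu.abs_zB_le hσ h.1) hpv.le⟩

/-- Bounds on reduced costs: if `e ∈ B(v)` is an improving switch for a weak unichain
policy `π` for `𝔇_n` with non-negative vertex values, then
`p_v / 4 ≤ z_π(e) ≤ p_v · 2^{n+2}`. -/
theorem stmt14 (n : ℕ) (hn : 1 ≤ n) (p : BV → ℚ)
    (hp : ∀ v, IsBVertex n v → v ≠ BV.s → 0 < p v ∧ p v ≤ 1)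
    (v : BV) (hv : IsBVertex n v) (hvs : v ≠ BV.s)
    (e : DV × DV) (he : Belongs n v e)
    (π : DV → DV) (hπ : IsDPolicy n π) (hwu : DWeakUnichain n p π)
    (hnn : ∀ u, IsDVertex n u → 0 ≤ DVal n p π u)
    (himp : DImproving n p π e.1 e.2) :
    p v / 4 ≤ zD n p π e.1 e.2 ∧ zD n p π e.1 e.2 ≤ p v * 2 ^ (n + 2) :=
  stmt14_general hp he hπ hwu himp
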